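/- Let P be a prime, J a positive integer, B a symplectic form on a 2J-dimensional vector space V over F_P, and Ψ the dual of a symplectic ETF for B. Then bin(Ψ) is exactly the set of all affine Lagrangian subspaces of V. Consequently bin(Ψ) forms a BIBD with parameters V = P^{2J}, K = P^J, Λ = ∏_{j=1}^{J−1}(P^j+1), R = ∏_{j=1}^{J}(P^j+1), B = P^J·∏_{j=1}^{J}(P^j+1): there are exactly P^J·∏_{j=1}^{J}(P^j+1) affine Lagrangian subspaces of V, each of cardinality P^J, every point of V lies in exactly ∏_{j=1}^{J}(P^j+1) of them, and every pair of distinct points of V lies in exactly ∏_{j=1}^{J−1}(P^j+1) of them. -/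

import Mathlib

open scoped BigOperators

noncomputable section

/-- ETF predicate. -/
def IsETF (𝕜 : Type*) {E ι : Type*} [RCLike 𝕜] [NormedAddCommGroup E]
    [InnerProductSpace 𝕜 E] [Fintype ι] (φ : ι → E) : Prop :=
  (∃ S : ℝ, 0 < S ∧ ∀ n, (inner 𝕜 (φ n) (φ n) : 𝕜) = (S : 𝕜)) ∧
  (∃ C : ℝ, 0 < C ∧ ∀ n₁ n₂, n₁ ≠ n₂ → ‖(inner 𝕜 (φ n₁) (φ n₂) : 𝕜)‖ = C) ∧
  (∃ A : ℝ, 0 < A ∧ ∀ n₁ n₃,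
      (∑ n₂, (inner 𝕜 (φ n₁) (φ n₂) : 𝕜) * (inner 𝕜 (φ n₂) (φ n₃) : 𝕜)) =
        (A : 𝕜) * (inner 𝕜 (φ n₁) (φ n₃) : 𝕜))

/-- Regular simplex predicate for a subfamily. -/
def IsRegularSimplex (𝕜 : Type*) {E ι : Type*} [RCLike 𝕜] [NormedAddCommGroup E]
    [InnerProductSpace 𝕜 E] [Fintype ι] (φ : ι → E) (K : Finset ι) : Prop :=
  IsETF 𝕜 (fun k : K => φ k.1) ∧
  Module.finrank 𝕜 (Submodule.span 𝕜 (φ '' (K : Set ι))) + 1 = K.card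

/-- The binder of a family. -/
def binder (𝕜 : Type*) {E ι : Type*} [RCLike 𝕜] [NormedAddCommGroup E]
    [InnerProductSpace 𝕜 E] [Fintype ι] (φ : ι → E) : Set (Finset ι) :=
  {K | IsRegularSimplex 𝕜 φ K}

/-- A bilinear form is symplectic: alternating and nondegenerate. -/
def IsSymplectic {F V : Type*} [CommRing F] [AddCommGroup V] [Module F V]
    (B : V →ₗ[F] V →ₗ[F] F) : Prop :=
  (∀ v, B v v = 0) ∧ ∀ v : V, v ≠ 0 → ∃ w, B v w ≠ 0

/-- The orthogonal complement of a subset with respect to a bilinear form. -/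
def sympPerp {F V : Type*} [CommRing F] [AddCommGroup V] [Module F V]
    (B : V →ₗ[F] V →ₗ[F] F) (S : Set V) : Set V :=
  {w | ∀ v ∈ S, B v w = 0}

/-- A subspace is Lagrangian if it equals its own orthogonal complement. -/
def IsLagrangian {F V : Type*} [CommRing F] [AddCommGroup V] [Module F V]
    (B : V →ₗ[F] V →ₗ[F] F) (L : Submodule F V) : Prop :=
  (L : Set V) = sympPerp B (L : Set V)

/-- The affine Lagrangian subspaces: cosets `v + L` of Lagrangian subspaces. -/
def affineLagrangians {F V : Type*} [CommRing F] [AddCommGroup V] [Module F V]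
    (B : V →ₗ[F] V →ₗ[F] F) : Set (Set V) :=
  {A | ∃ (v : V) (L : Submodule F V), IsLagrangian B L ∧
        A = (fun x => v + x) '' (L : Set V)}

/-!
The Gram matrix of a subfamily of `Ψ` is `P ^ J • 1 - N`, where `N x y = exp (2πi B(x, y) / P)` has
entries of modulus one. If this Gram matrix is tight, its rank is its trace divided by the frame
constant, so the subfamily is a regular simplex exactly when it has `P ^ J` members and
`N * N = P ^ J • N`. By the equality case of the triangle inequality the latter says that
`N x y * N y z = N x z`, that is `B x y + B y z = B x z`. Hence the differences of the members
span an isotropic subspace, which is Lagrangian for reasons of cardinality.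

The Lagrangian subspaces through `v ≠ 0` correspond to those of `{v, w}^⊥`, where `B v w = 1`.
Counting the pairs of a Lagrangian subspace and a nonzero vector in it in two ways then gives the
number of Lagrangian subspaces by induction on the dimension, and the design parameters follow.
-/

open scoped Matrix Pointwise
open LinearMap (BilinForm)
open Matrix (gram)

section Frames

variable {ι 𝕜 E : Type*} [Fintype ι] [RCLike 𝕜] [NormedAddCommGroup E] [InnerProductSpace 𝕜 E]

theorem gram_mulVec_eq_zero_iff {φ : ι → E} {a : ι → 𝕜} :
    gram 𝕜 φ *ᵥ a = 0 ↔ ∑ i, a i • φ i = 0 := by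
  constructor
  · intro h
    rw [← inner_self_eq_zero (𝕜 := 𝕜), ← Matrix.star_dotProduct_gram_mulVec, h, dotProduct_zero]
  · intro h
    ext i
    simp only [Matrix.mulVec, dotProduct, Matrix.gram_apply, mul_comm (inner 𝕜 _ _),
      ← inner_smul_right, ← inner_sum, h, inner_zero_right, Pi.zero_apply]

theorem rank_gram (φ : ι → E) :
    (gram 𝕜 φ).rank = Module.finrank 𝕜 (Submodule.span 𝕜 (Set.range φ)) := by
  have hker : LinearMap.ker (gram 𝕜 φ).mulVecLin =
      LinearMap.ker (Fintype.linearCombination 𝕜 φ) := by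
    ext a
    simpa [Fintype.linearCombination_apply] using gram_mulVec_eq_zero_iff
  have hgram := (gram 𝕜 φ).mulVecLin.finrank_range_add_finrank_ker
  have hsynth := (Fintype.linearCombination 𝕜 φ).finrank_range_add_finrank_ker
  rw [Matrix.rank, ← Fintype.range_linearCombination]
  rw [hker] at hgram
  lia

theorem mul_rank_eq_trace_of_mul_self_eq_smul {K : Type*} [Field K] {M : Matrix ι ι K}
    {a : K} (ha : a ≠ 0) (hM : M * M = a • M) : a * M.rank = M.trace := by
  classical
  have hidem : IsIdempotentElem (a⁻¹ • M).toLin' := by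
    rw [IsIdempotentElem, Module.End.mul_eq_comp, ← Matrix.toLin'_mul, smul_mul_smul_comm, hM,
      smul_smul, inv_mul_cancel_right₀ ha]
  have htrace := (LinearMap.IsIdempotentElem.isProj_range _ hidem).trace
  rw [Matrix.trace_toLin'_eq, Matrix.toLin'_apply', ← Matrix.rank, Matrix.trace_smul, smul_eq_mul,
    M.rank_smul_of_mem_nonZeroDivisors (mem_nonZeroDivisors_of_ne_zero (inv_ne_zero ha))] at htrace
  rw [← htrace, mul_inv_cancel_left₀ ha]

theorem eq_of_sum_eq_card_smul {z : ι → E} {w : E} (hz : ∀ i, ‖z i‖ ≤ ‖w‖)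
    (hsum : ∑ i, z i = (Fintype.card ι : 𝕜) • w) (i : ι) : z i = w := by
  have hdist : ∑ i, ‖z i - w‖ ^ 2 = ∑ i, (‖z i‖ ^ 2 - ‖w‖ ^ 2) := by
    have hre : ∑ i, RCLike.re (inner 𝕜 (z i) w) = Fintype.card ι * ‖w‖ ^ 2 := by
      rw [← map_sum, ← sum_inner, hsum, inner_smul_left, inner_self_eq_norm_sq_to_K]
      norm_cast
      simp
    simp only [norm_sub_sq (𝕜 := 𝕜), Finset.sum_add_distrib, Finset.sum_sub_distrib,
      ← Finset.mul_sum, hre, Finset.sum_const, Finset.card_univ, nsmul_eq_mul]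
    ring
  have hle : ∑ i, ‖z i - w‖ ^ 2 ≤ 0 :=
    hdist.trans_le <| Finset.sum_nonpos fun i _ =>
      sub_nonpos.2 (pow_le_pow_left₀ (norm_nonneg _) (hz i) 2)
  have hzero := (Finset.sum_eq_zero_iff_of_nonneg fun i _ => sq_nonneg ‖z i - w‖).1
    (hle.antisymm (Finset.sum_nonneg fun i _ => sq_nonneg _)) i (Finset.mem_univ i)
  simpa [sub_eq_zero] using hzero

theorem mul_self_eq_card_smul_iff {N : Matrix ι ι 𝕜} (hN : ∀ i j, ‖N i j‖ = 1) :
    N * N = (Fintype.card ι : 𝕜) • N ↔ ∀ i j l, N i j * N j l = N i l := by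
  constructor
  · intro h i j l
    refine eq_of_sum_eq_card_smul (𝕜 := 𝕜) (z := fun j => N i j * N j l) (fun j => ?_)
      (congrFun₂ h i l) j
    simp [hN]
  · intro h
    ext i l
    simp [Matrix.mul_apply, h]

theorem isETF_iff_gram {φ : ι → E} : IsETF 𝕜 φ ↔
    (∃ S : ℝ, 0 < S ∧ ∀ i, gram 𝕜 φ i i = S) ∧
    (∃ C : ℝ, 0 < C ∧ ∀ i j, i ≠ j → ‖gram 𝕜 φ i j‖ = C) ∧
    ∃ A : ℝ, 0 < A ∧ gram 𝕜 φ * gram 𝕜 φ = (A : 𝕜) • gram 𝕜 φ := by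
  simp only [IsETF, Matrix.gram_apply, ← Matrix.ext_iff, Matrix.mul_apply, Matrix.smul_apply,
    smul_eq_mul]

end Frames

section PhaseMatrix

variable {ι 𝕜 E : Type*} [DecidableEq ι] [RCLike 𝕜] [NormedAddCommGroup E]
  [InnerProductSpace 𝕜 E]

/-- The normalized equiangular families: those whose Gram matrix is `m • 1 - N` with `N` unimodular
and `N i i = 1`, so that `⟪φ i, φ i⟫ = m - 1` and the inner products of distinct members are the
phases `-N i j`. -/
structure HasPhaseMatrix (φ : ι → E) (m : ℝ) (N : Matrix ι ι 𝕜) : Prop where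
  gram_eq : gram 𝕜 φ = (m : 𝕜) • 1 - N
  diag_eq_one : ∀ i, N i i = 1
  norm_eq_one : ∀ i j, ‖N i j‖ = 1

namespace HasPhaseMatrix

variable {φ : ι → E} {m : ℝ} {N : Matrix ι ι 𝕜}

theorem isHermitian (h : HasPhaseMatrix φ m N) : N.IsHermitian := by
  have hN : N = (m : 𝕜) • 1 - gram 𝕜 φ := by rw [h.gram_eq, sub_sub_cancel]
  rw [hN]
  refine .sub ?_ (Matrix.isHermitian_gram 𝕜 φ)
  rw [Matrix.IsHermitian, Matrix.conjTranspose_smul, Matrix.conjTranspose_one, RCLike.star_def,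
    RCLike.conj_ofReal]

theorem comp_injective {κ : Type*} [DecidableEq κ] (h : HasPhaseMatrix φ m N) {f : κ → ι}
    (hf : Function.Injective f) : HasPhaseMatrix (φ ∘ f) m (N.submatrix f f) where
  gram_eq := by
    change (gram 𝕜 φ).submatrix f f = _
    rw [h.gram_eq, ← Matrix.submatrix_one f hf]
    rfl
  diag_eq_one i := h.diag_eq_one (f i)
  norm_eq_one i j := h.norm_eq_one (f i) (f j)

variable [Fintype ι]

theorem mul_self_diag (h : HasPhaseMatrix φ m N) (i : ι) : (N * N) i i = Fintype.card ι := by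
  have hentry : ∀ j, N i j * N j i = 1 := fun j => by
    rw [← h.isHermitian.apply j i, RCLike.star_def, RCLike.mul_conj, h.norm_eq_one]
    simp
  simp [Matrix.mul_apply, hentry]

theorem gram_mul_self (h : HasPhaseMatrix φ m N) :
    gram 𝕜 φ * gram 𝕜 φ = (m : 𝕜) • gram 𝕜 φ - (m : 𝕜) • N + N * N := by
  rw [h.gram_eq, sub_mul, mul_sub, mul_sub]
  simp only [smul_mul_assoc, one_mul, mul_smul_comm, mul_one, smul_sub]
  abel

theorem trace_gram (h : HasPhaseMatrix φ m N) :
    (gram 𝕜 φ).trace = Fintype.card ι * ((m : 𝕜) - 1) := by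
  simp only [h.gram_eq, Matrix.trace, Matrix.diag, Matrix.sub_apply, Matrix.smul_apply,
    Matrix.one_apply_eq, h.diag_eq_one, smul_eq_mul, mul_one, Finset.sum_const, Finset.card_univ,
    nsmul_eq_mul]

theorem card_eq_and_frameBound_eq (h : HasPhaseMatrix φ m N) (hm : 1 < m) {A : ℝ} (hA : A ≠ 0)
    (htight : gram 𝕜 φ * gram 𝕜 φ = (A : 𝕜) • gram 𝕜 φ)
    (hrank : (gram 𝕜 φ).rank + 1 = Fintype.card ι) :
    Fintype.card ι = m ∧ A = m := by
  have htrace : A * (gram 𝕜 φ).rank = Fintype.card ι * (m - 1) := by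
    have h := (mul_rank_eq_trace_of_mul_self_eq_smul (by exact_mod_cast hA) htight).trans
      h.trace_gram
    exact_mod_cast h
  have hcard : (Fintype.card ι : ℝ) = (gram 𝕜 φ).rank + 1 := by exact_mod_cast hrank.symm
  obtain ⟨i⟩ : Nonempty ι := Fintype.card_pos_iff.1 (by lia)
  have hdiag : (m - 1) ^ 2 + (gram 𝕜 φ).rank = A * (m - 1) := by
    have hentry := congrFun₂ htight i i
    rw [h.gram_mul_self, Matrix.add_apply, Matrix.sub_apply, h.mul_self_diag] at hentry
    simp only [h.gram_eq, Matrix.smul_apply, Matrix.sub_apply, Matrix.one_apply_eq,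
      h.diag_eq_one, smul_eq_mul, mul_one] at hentry
    have hreal : m * (m - 1) - m + Fintype.card ι = A * (m - 1) := by exact_mod_cast hentry
    linear_combination hreal - hcard
  -- Eliminating `A` between the trace and the diagonal entry leaves `rank ^ 2 = (m - 1) ^ 2`.
  have hrank_eq : ((gram 𝕜 φ).rank : ℝ) = m - 1 := by
    have hsq : ((gram 𝕜 φ).rank : ℝ) ^ 2 = (m - 1) ^ 2 := by
      linear_combination ((gram 𝕜 φ).rank : ℝ) * hdiag + (m - 1) * htrace + (m - 1) ^ 2 * hcard
    exact (sq_eq_sq₀ (Nat.cast_nonneg _) (by linarith)).1 hsq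
  have hcard_eq : (Fintype.card ι : ℝ) = m := by rw [hcard, hrank_eq, sub_add_cancel]
  refine ⟨hcard_eq, mul_right_cancel₀ (sub_pos.2 hm).ne' ?_⟩
  rwa [hrank_eq, hcard_eq] at htrace

theorem isETF_and_finrank_iff (h : HasPhaseMatrix φ m N) (hm : 1 < m) :
    IsETF 𝕜 φ ∧ Module.finrank 𝕜 (Submodule.span 𝕜 (Set.range φ)) + 1 = Fintype.card ι ↔
      Fintype.card ι = m ∧ ∀ i j l, N i j * N j l = N i l := by
  rw [← rank_gram (𝕜 := 𝕜), isETF_iff_gram, ← mul_self_eq_card_smul_iff h.norm_eq_one]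
  constructor
  · rintro ⟨⟨-, -, A, hA, htight⟩, hrank⟩
    obtain ⟨hcard, rfl⟩ := h.card_eq_and_frameBound_eq hm hA.ne' htight hrank
    have hcard' : (Fintype.card ι : 𝕜) = A := by
      exact_mod_cast congrArg (RCLike.ofReal (K := 𝕜)) hcard
    rw [h.gram_mul_self, sub_add, sub_eq_self, sub_eq_zero] at htight
    exact ⟨hcard, by rw [← htight, hcard']⟩
  · rintro ⟨hcard, hNN⟩
    have hcard' : (Fintype.card ι : 𝕜) = m := by
      exact_mod_cast congrArg (RCLike.ofReal (K := 𝕜)) hcard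
    have htight : gram 𝕜 φ * gram 𝕜 φ = (m : 𝕜) • gram 𝕜 φ := by
      rw [h.gram_mul_self, hNN, hcard', sub_add_cancel]
    have hm0 : 0 < m := one_pos.trans hm
    refine ⟨⟨⟨m - 1, sub_pos.2 hm, fun i => ?_⟩, ⟨1, one_pos, fun i j hij => ?_⟩,
      ⟨m, hm0, htight⟩⟩, ?_⟩
    · rw [h.gram_eq, Matrix.sub_apply, Matrix.smul_apply, Matrix.one_apply_eq, h.diag_eq_one,
        smul_eq_mul, mul_one, RCLike.ofReal_sub, RCLike.ofReal_one]
    · rw [h.gram_eq]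
      simp [hij, h.norm_eq_one]
    · have hm0' : (m : 𝕜) ≠ 0 := by exact_mod_cast hm0.ne'
      have htrace := (mul_rank_eq_trace_of_mul_self_eq_smul hm0' htight).trans h.trace_gram
      rw [hcard', mul_right_inj' hm0', ← hcard', eq_sub_iff_add_eq] at htrace
      exact_mod_cast htrace

theorem mem_binder_iff (h : HasPhaseMatrix φ m N) (hm : 1 < m) {K : Finset ι} :
    K ∈ binder 𝕜 φ ↔ K.card = m ∧ ∀ i ∈ K, ∀ j ∈ K, ∀ l ∈ K, N i j * N j l = N i l := by
  have hK := (h.comp_injective (Subtype.val_injective (p := (· ∈ K)))).isETF_and_finrank_iff hm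
  rw [Set.range_comp, Subtype.range_coe_subtype] at hK
  simp only [Fintype.card_coe, Subtype.forall, Matrix.submatrix_apply] at hK
  exact hK

end HasPhaseMatrix

end PhaseMatrix

theorem ncard_mul_eq_ncard_mul {α β : Type*} (r : α → β → Prop) {s : Set α} {t : Set β}
    {m n : ℕ} (hs : s.Finite) (ht : t.Finite) (hm : ∀ a ∈ s, {b ∈ t | r a b}.ncard = m)
    (hn : ∀ b ∈ t, {a ∈ s | r a b}.ncard = n) : s.ncard * m = t.ncard * n := by
  classical
  lift s to Finset α using hs
  lift t to Finset β using ht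
  rw [Set.ncard_coe_finset, Set.ncard_coe_finset]
  refine Finset.card_mul_eq_card_mul r (fun a ha => ?_) fun b hb => ?_
  · rw [← hm a ha, ← Set.ncard_coe_finset, Finset.coe_bipartiteAbove]
    rfl
  · rw [← hn b hb, ← Set.ncard_coe_finset, Finset.coe_bipartiteBelow]
    rfl

section Symplectic

variable {R V : Type*} [CommRing R] [AddCommGroup V] [Module R V] {B : V →ₗ[R] V →ₗ[R] R}

theorem IsSymplectic.isAlt (hB : IsSymplectic B) : B.IsAlt := hB.1

theorem IsSymplectic.nondegenerate (hB : IsSymplectic B) : B.Nondegenerate :=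
  hB.isAlt.isRefl.nondegenerate_iff_separatingLeft.2 fun v hv => by
    by_contra hne
    obtain ⟨w, hw⟩ := hB.2 v hne
    exact hw (hv w)

theorem isLagrangian_iff {L : Submodule R V} :
    IsLagrangian B L ↔ ∀ u, u ∈ L ↔ ∀ x ∈ L, B x u = 0 := by
  simp only [IsLagrangian, Set.ext_iff, sympPerp, SetLike.mem_coe, Set.mem_ofPred_eq]

theorem isLagrangian_iff_orthogonal_eq {L : Submodule R V} :
    IsLagrangian B L ↔ BilinForm.orthogonal B L = L := by
  rw [isLagrangian_iff, eq_comm, Submodule.ext_iff]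
  rfl

/-- The orthogonal complement of the hyperbolic plane spanned by `v` and `w`, where `B v w = 1`.
It is a model of the symplectic reduction `{v}^⊥ / ⟨v⟩`. -/
def hyperbolicPerp (B : V →ₗ[R] V →ₗ[R] R) (v w : V) : Submodule R V :=
  LinearMap.ker ((B v).prod (B w))

variable {v w u : V}

theorem mem_hyperbolicPerp : u ∈ hyperbolicPerp B v w ↔ B v u = 0 ∧ B w u = 0 := by
  simp [hyperbolicPerp]

theorem sub_add_mem_hyperbolicPerp (hB : B.IsAlt) (hvw : B v w = 1) (u : V) :
    u - B v u • w + B w u • v ∈ hyperbolicPerp B v w := by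
  have hwv : B w v = -1 := by rw [← hB.neg, hvw]
  simp [mem_hyperbolicPerp, hB.self_eq_zero, hvw, hwv]

theorem add_smul_mem_hyperbolicPerp (hB : B.IsAlt) (hvw : B v w = 1) (hu : B v u = 0) :
    u + B w u • v ∈ hyperbolicPerp B v w := by
  simpa only [hu, zero_smul, sub_zero] using sub_add_mem_hyperbolicPerp hB hvw u

theorem IsSymplectic.restrict_hyperbolicPerp (hB : IsSymplectic B) (hvw : B v w = 1) :
    IsSymplectic (BilinForm.restrict B (hyperbolicPerp B v w)) := by
  refine ⟨fun x => hB.1 _, fun x hx => ?_⟩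
  obtain ⟨y, hy⟩ := hB.2 x (by simpa using hx)
  obtain ⟨hvx, hwx⟩ := mem_hyperbolicPerp.1 x.2
  have hxv : B x v = 0 := hB.isAlt.isRefl _ _ hvx
  have hxw : B x w = 0 := hB.isAlt.isRefl _ _ hwx
  exact ⟨⟨_, sub_add_mem_hyperbolicPerp hB.isAlt hvw y⟩,
    by simpa [BilinForm.restrict_apply, hxv, hxw] using hy⟩

theorem mem_map_hyperbolicPerp_sup_span_iff (hB : B.IsAlt) (hvw : B v w = 1)
    (M : Submodule R (hyperbolicPerp B v w)) :
    u ∈ M.map (hyperbolicPerp B v w).subtype ⊔ Submodule.span R {v} ↔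
      ∃ hu : B v u = 0, ⟨u + B w u • v, add_smul_mem_hyperbolicPerp hB hvw hu⟩ ∈ M := by
  have hwv : B w v = -1 := by rw [← hB.neg, hvw]
  simp only [Submodule.mem_sup, Submodule.mem_map, Submodule.mem_span_singleton]
  constructor
  · rintro ⟨_, ⟨m, hm, rfl⟩, _, ⟨a, rfl⟩, rfl⟩
    obtain ⟨hvm, hwm⟩ := mem_hyperbolicPerp.1 m.2
    refine ⟨by simp [hvm, hB.self_eq_zero], ?_⟩
    convert hm
    simp [hwm, hwv]
  · rintro ⟨hu, hM⟩
    exact ⟨_, ⟨_, hM, rfl⟩, _, ⟨-B w u, rfl⟩, by simp⟩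

theorem IsLagrangian.comap_hyperbolicPerp {L : Submodule R V} (hL : IsLagrangian B L)
    (hB : B.IsAlt) (hvw : B v w = 1) (hv : v ∈ L) :
    IsLagrangian (BilinForm.restrict B (hyperbolicPerp B v w))
      (L.comap (hyperbolicPerp B v w).subtype) := by
  rw [isLagrangian_iff] at hL ⊢
  refine fun u => ⟨fun hu x hx => (hL u).1 hu x hx, fun hu => (hL u).2 fun x hx => ?_⟩
  have hvx : B v x = 0 := (hL x).1 hx v hv
  have hxL : x + B w x • v ∈ L := L.add_mem hx (L.smul_mem _ hv)
  simpa [BilinForm.restrict_apply, (mem_hyperbolicPerp.1 u.2).1] using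
    hu ⟨_, add_smul_mem_hyperbolicPerp hB hvw hvx⟩ hxL

theorem IsLagrangian.map_hyperbolicPerp_sup_span {M : Submodule R (hyperbolicPerp B v w)}
    (hM : IsLagrangian (BilinForm.restrict B (hyperbolicPerp B v w)) M)
    (hB : B.IsAlt) (hvw : B v w = 1) :
    IsLagrangian B (M.map (hyperbolicPerp B v w).subtype ⊔ Submodule.span R {v}) := by
  rw [isLagrangian_iff] at hM ⊢
  have hreduce : ∀ {x u : V}, B v x = 0 → B v u = 0 →
      B (x + B w x • v) (u + B w u • v) = B x u := fun {x u} hx hu => by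
    simp [hu, hB.isRefl _ _ hx, hB.self_eq_zero]
  refine fun u => ⟨fun hu x hx => ?_, fun hu => ?_⟩
  · obtain ⟨hvu, huM⟩ := (mem_map_hyperbolicPerp_sup_span_iff hB hvw M).1 hu
    obtain ⟨hvx, hxM⟩ := (mem_map_hyperbolicPerp_sup_span_iff hB hvw M).1 hx
    rw [← hreduce hvx hvu]
    exact (hM _).1 huM _ hxM
  · have hvu : B v u = 0 := hu v (Submodule.mem_sup_right (Submodule.mem_span_singleton_self v))
    refine (mem_map_hyperbolicPerp_sup_span_iff hB hvw M).2 ⟨hvu, (hM _).2 fun x hx => ?_⟩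
    have hxu : B x u = 0 := hu x (Submodule.mem_sup_left ⟨x, hx, rfl⟩)
    simp [BilinForm.restrict_apply, hxu, hB.isRefl _ _ (mem_hyperbolicPerp.1 x.2).1]

theorem ncard_lagrangians_mem_eq (hB : B.IsAlt) (hvw : B v w = 1) :
    {L : Submodule R V | IsLagrangian B L ∧ v ∈ L}.ncard =
      {M | IsLagrangian (BilinForm.restrict B (hyperbolicPerp B v w)) M}.ncard := by
  refine Set.BijOn.ncard_eq (f := fun L => L.comap (hyperbolicPerp B v w).subtype) <|
    Set.InvOn.bijOn
      (f' := fun M => M.map (hyperbolicPerp B v w).subtype ⊔ Submodule.span R {v})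
      ⟨fun L ⟨hL, hv⟩ => ?_, fun M _ => ?_⟩
      (fun L ⟨hL, hv⟩ => hL.comap_hyperbolicPerp hB hvw hv)
      fun M hM => ⟨hM.map_hyperbolicPerp_sup_span hB hvw,
        Submodule.mem_sup_right (Submodule.mem_span_singleton_self v)⟩
  · ext u
    rw [mem_map_hyperbolicPerp_sup_span_iff hB hvw]
    have hmem : u + B w u • v ∈ L ↔ u ∈ L := L.add_mem_iff_left (L.smul_mem _ hv)
    exact ⟨fun ⟨_, hu⟩ => hmem.1 hu, fun hu => ⟨(isLagrangian_iff.1 hL u).1 hu v hv, hmem.2 hu⟩⟩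
  · ext u
    obtain ⟨hvu, hwu⟩ := mem_hyperbolicPerp.1 u.2
    rw [Submodule.mem_comap, mem_map_hyperbolicPerp_sup_span_iff hB hvw]
    simp [hvu, hwu]

end Symplectic

section Field

variable {F V : Type*} [Field F] [AddCommGroup V] [Module F V] {B : V →ₗ[F] V →ₗ[F] F}

theorem IsSymplectic.exists_apply_eq_one (hB : IsSymplectic B) {v : V} (hv : v ≠ 0) :
    ∃ w, B v w = 1 := by
  obtain ⟨w, hw⟩ := hB.2 v hv
  exact ⟨(B v w)⁻¹ • w, by simp [hw]⟩

variable [FiniteDimensional F V]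

theorem IsLagrangian.two_mul_finrank (hB : IsSymplectic B) {L : Submodule F V}
    (hL : IsLagrangian B L) : 2 * Module.finrank F L = Module.finrank F V := by
  have hperp := BilinForm.finrank_orthogonal hB.nondegenerate L
  rw [isLagrangian_iff_orthogonal_eq.1 hL] at hperp
  have : Module.finrank F L ≤ Module.finrank F V := L.finrank_le
  lia

theorem isLagrangian_of_le_orthogonal (hB : IsSymplectic B) {L : Submodule F V}
    (hL : L ≤ BilinForm.orthogonal B L)
    (hdim : Module.finrank F V ≤ 2 * Module.finrank F L) : IsLagrangian B L := by
  have hperp := BilinForm.finrank_orthogonal hB.nondegenerate L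
  exact isLagrangian_iff_orthogonal_eq.2 (Submodule.eq_of_le_of_finrank_le hL (by lia)).symm

theorem finrank_hyperbolicPerp_add_two (hB : B.IsAlt) {v w : V} (hvw : B v w = 1) :
    Module.finrank F (hyperbolicPerp B v w) + 2 = Module.finrank F V := by
  have hsurj : LinearMap.range ((B v).prod (B w)) = ⊤ := by
    refine LinearMap.range_eq_top.2 fun ⟨a, b⟩ => ⟨a • w - b • v, ?_⟩
    simp [hB.self_eq_zero, hvw, ← hB.neg v w]
  have hrank := ((B v).prod (B w)).finrank_range_add_finrank_ker
  rw [hsurj, finrank_top, Module.finrank_prod, Module.finrank_self] at hrank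
  rw [hyperbolicPerp, ← hrank, add_comm]

end Field

section Counting

variable {F V : Type*} [Field F] [AddCommGroup V] [Module F V] [FiniteDimensional F V]
  {B : V →ₗ[F] V →ₗ[F] F} {J : ℕ}

theorem IsLagrangian.natCard_eq (hB : IsSymplectic B) (hdim : Module.finrank F V = 2 * J)
    {L : Submodule F V} (hL : IsLagrangian B L) : Nat.card L = Nat.card F ^ J := by
  have hfinrank := hL.two_mul_finrank hB
  rw [Module.natCard_eq_pow_finrank (K := F) (V := L)]
  congr 1
  lia

variable [Finite F]

theorem ncard_lagrangians (hB : IsSymplectic B) (hdim : Module.finrank F V = 2 * J) :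
    {L : Submodule F V | IsLagrangian B L}.ncard =
      ∏ j ∈ Finset.Icc 1 J, (Nat.card F ^ j + 1) := by
  have := Module.finite_of_finite F (M := V)
  induction J generalizing V with
  | zero =>
    have : Subsingleton V := Module.finrank_zero_iff.1 hdim
    have hall : {L : Submodule F V | IsLagrangian B L} = Set.univ :=
      Set.eq_univ_of_forall fun L => isLagrangian_iff.2 fun u => by simp [Subsingleton.elim u 0]
    simp [hall]
  | succ J ih =>
    have hcount := ncard_mul_eq_ncard_mul (fun (L : Submodule F V) v => v ∈ L)
      (s := {L | IsLagrangian B L}) (t := {v | v ≠ 0}) (m := Nat.card F ^ (J + 1) - 1)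
      (n := ∏ j ∈ Finset.Icc 1 J, (Nat.card F ^ j + 1)) (Set.toFinite _) (Set.toFinite _)
      (fun L hL => ?_) fun v hv => ?_
    · have hvectors : {v : V | v ≠ 0}.ncard =
          (Nat.card F ^ (J + 1) + 1) * (Nat.card F ^ (J + 1) - 1) := by
        rw [← Set.compl_singleton_eq, Set.ncard_compl, Set.ncard_singleton,
          Module.natCard_eq_pow_finrank (K := F), hdim, mul_comm 2, pow_mul, ← Nat.sq_sub_sq,
          one_pow]
      have hpos : 0 < Nat.card F ^ (J + 1) - 1 :=
        Nat.sub_pos_of_lt (Nat.one_lt_pow J.succ_ne_zero Finite.one_lt_card)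
      rw [hvectors] at hcount
      rw [Finset.prod_Icc_succ_top (by lia)]
      refine Nat.eq_of_mul_eq_mul_right hpos (hcount.trans ?_)
      ring
    · have hdiff : {v ∈ {v : V | v ≠ 0} | v ∈ L} = (L : Set V) \ {0} := by
        ext v
        exact and_comm
      rw [hdiff, Set.ncard_sdiff_singleton_of_mem L.zero_mem, ← hL.natCard_eq hB hdim]
      rfl
    · obtain ⟨w, hvw⟩ := hB.exists_apply_eq_one hv
      have hperp := finrank_hyperbolicPerp_add_two hB.isAlt hvw
      exact (ncard_lagrangians_mem_eq hB.isAlt hvw).trans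
        (ih (hB.restrict_hyperbolicPerp hvw) (by lia) inferInstance)

theorem ncard_lagrangians_mem (hB : IsSymplectic B) (hdim : Module.finrank F V = 2 * J) {v : V}
    (hv : v ≠ 0) : {L : Submodule F V | IsLagrangian B L ∧ v ∈ L}.ncard =
      ∏ j ∈ Finset.Icc 1 (J - 1), (Nat.card F ^ j + 1) := by
  obtain ⟨w, hvw⟩ := hB.exists_apply_eq_one hv
  have hperp := finrank_hyperbolicPerp_add_two hB.isAlt hvw
  rw [ncard_lagrangians_mem_eq hB.isAlt hvw]
  exact ncard_lagrangians (hB.restrict_hyperbolicPerp hvw) (by lia)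

end Counting

section Affine

variable {R V : Type*} [CommRing R] [AddCommGroup V] [Module R V] {B : V →ₗ[R] V →ₗ[R] R}

theorem mem_affineLagrangians {A : Set V} :
    A ∈ affineLagrangians B ↔
      ∃ (v : V) (L : Submodule R V), IsLagrangian B L ∧ A = v +ᵥ (L : Set V) := Iff.rfl

theorem injective_vadd_coe_submodule (v : V) :
    Function.Injective fun L : Submodule R V => v +ᵥ (L : Set V) :=
  (AddAction.injective v).comp SetLike.coe_injective

theorem affineLagrangians_mem_eq_image (x : V) :
    {A ∈ affineLagrangians B | x ∈ A} =
      (fun L : Submodule R V => x +ᵥ (L : Set V)) '' {L | IsLagrangian B L} := by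
  ext A
  constructor
  · rintro ⟨⟨v, L, hL, rfl⟩, hx⟩
    exact ⟨L, hL, ((leftAddCoset_eq_iff L.toAddSubgroup).2 ((mem_leftAddCoset_iff v).1 hx)).symm⟩
  · rintro ⟨L, hL, rfl⟩
    exact ⟨⟨x, L, hL, rfl⟩, 0, L.zero_mem, add_zero x⟩

theorem affineLagrangians_mem_mem_eq_image (x y : V) :
    {A ∈ affineLagrangians B | x ∈ A ∧ y ∈ A} =
      (fun L : Submodule R V => x +ᵥ (L : Set V)) '' {L | IsLagrangian B L ∧ -x + y ∈ L} := by
  calc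
    _ = {A ∈ affineLagrangians B | x ∈ A} ∩ {A | y ∈ A} := by
      ext A
      exact and_assoc.symm
    _ = (fun L : Submodule R V => x +ᵥ (L : Set V)) ''
        ({L | IsLagrangian B L} ∩ (fun L => x +ᵥ (L : Set V)) ⁻¹' {A | y ∈ A}) := by
      rw [affineLagrangians_mem_eq_image, Set.image_inter_preimage]
    _ = _ := by
      congr 1
      ext L
      exact and_congr_right' (mem_leftAddCoset_iff x)

theorem add_apply_eq_of_mem_affineLagrangians (hB : B.IsAlt) {A : Set V}
    (hA : A ∈ affineLagrangians B) {x y z : V} (hx : x ∈ A) (hy : y ∈ A) (hz : z ∈ A) :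
    B x y + B y z = B x z := by
  obtain ⟨v, L, hL, rfl⟩ := mem_affineLagrangians.1 hA
  obtain ⟨⟨a, ha, rfl⟩, ⟨b, hb, rfl⟩, ⟨c, hc, rfl⟩⟩ := hx, hy, hz
  have hLL : ∀ {a b}, a ∈ L → b ∈ L → B a b = 0 := fun ha hb => (isLagrangian_iff.1 hL _).1 hb _ ha
  simp only [vadd_eq_add, map_add, LinearMap.add_apply, hB.self_eq_zero, ← hB.neg v b, hLL ha hb,
    hLL hb hc, hLL ha hc, zero_add, add_zero]
  ring

theorem span_neg_vadd_le_orthogonal (hB : B.IsAlt) {K : Set V}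
    (hK : ∀ x ∈ K, ∀ y ∈ K, ∀ z ∈ K, B x y + B y z = B x z) {v : V} (hv : v ∈ K) :
    Submodule.span R (-v +ᵥ K) ≤ BilinForm.orthogonal B (Submodule.span R (-v +ᵥ K)) := by
  intro u hu x hx
  refine Submodule.span_induction₂ (p := fun x u _ _ => B x u = 0) ?_ ?_ ?_ ?_ ?_ ?_ ?_ hx hu
  · rintro _ _ ⟨x, hx, rfl⟩ ⟨y, hy, rfl⟩
    simp [hB.self_eq_zero, ← hK x hx v hv y hy]
  all_goals simp +contextual

end Affine

section AffineCounting

variable {F V : Type*} [Field F] [AddCommGroup V] [Module F V] [FiniteDimensional F V]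
  {B : V →ₗ[F] V →ₗ[F] F} {J : ℕ}

theorem ncard_of_mem_affineLagrangians (hB : IsSymplectic B)
    (hdim : Module.finrank F V = 2 * J) {A : Set V} (hA : A ∈ affineLagrangians B) :
    A.ncard = Nat.card F ^ J := by
  obtain ⟨v, L, hL, rfl⟩ := mem_affineLagrangians.1 hA
  rw [Set.ncard_vadd_set, ← hL.natCard_eq hB hdim]
  rfl

variable [Finite F]

theorem ncard_affineLagrangians_mem (hB : IsSymplectic B) (hdim : Module.finrank F V = 2 * J)
    (x : V) : {A ∈ affineLagrangians B | x ∈ A}.ncard =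
      ∏ j ∈ Finset.Icc 1 J, (Nat.card F ^ j + 1) := by
  rw [affineLagrangians_mem_eq_image,
    Set.ncard_image_of_injective _ (injective_vadd_coe_submodule x), ncard_lagrangians hB hdim]

theorem ncard_affineLagrangians_mem_mem (hB : IsSymplectic B)
    (hdim : Module.finrank F V = 2 * J) {x y : V} (hxy : x ≠ y) :
    {A ∈ affineLagrangians B | x ∈ A ∧ y ∈ A}.ncard =
      ∏ j ∈ Finset.Icc 1 (J - 1), (Nat.card F ^ j + 1) := by
  rw [affineLagrangians_mem_mem_eq_image,
    Set.ncard_image_of_injective _ (injective_vadd_coe_submodule x),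
    ncard_lagrangians_mem hB hdim (neg_add_eq_zero.not.2 hxy)]

theorem ncard_affineLagrangians (hB : IsSymplectic B) (hdim : Module.finrank F V = 2 * J) :
    (affineLagrangians B).ncard =
      Nat.card F ^ J * ∏ j ∈ Finset.Icc 1 J, (Nat.card F ^ j + 1) := by
  have := Module.finite_of_finite F (M := V)
  have hcount := ncard_mul_eq_ncard_mul (fun (A : Set V) x => x ∈ A) (s := affineLagrangians B)
    (t := Set.univ) (m := Nat.card F ^ J) (Set.toFinite _) Set.finite_univ
    (fun A hA => by simpa using ncard_of_mem_affineLagrangians hB hdim hA)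
    fun x _ => ncard_affineLagrangians_mem hB hdim x
  rw [Set.ncard_univ, Module.natCard_eq_pow_finrank (K := F) (V := V), hdim] at hcount
  refine Nat.eq_of_mul_eq_mul_right (pow_pos Nat.card_pos J) (hcount.trans ?_)
  ring

theorem mem_affineLagrangians_iff (hB : IsSymplectic B) (hdim : Module.finrank F V = 2 * J)
    {K : Set V} : K ∈ affineLagrangians B ↔
      K.ncard = Nat.card F ^ J ∧ ∀ x ∈ K, ∀ y ∈ K, ∀ z ∈ K, B x y + B y z = B x z := by
  refine ⟨fun hK => ⟨ncard_of_mem_affineLagrangians hB hdim hK, fun x hx y hy z hz =>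
    add_apply_eq_of_mem_affineLagrangians hB.isAlt hK hx hy hz⟩, fun ⟨hcard, hK⟩ => ?_⟩
  have := Module.finite_of_finite F (M := V)
  obtain ⟨v, hv⟩ : K.Nonempty :=
    Set.nonempty_of_ncard_ne_zero (hcard ▸ (pow_pos Nat.card_pos J).ne')
  set L := Submodule.span F (-v +ᵥ K)
  have hKL : K ⊆ v +ᵥ (L : Set V) := Set.subset_vadd_set_iff.2 Submodule.subset_span
  have hfinrank : J ≤ Module.finrank F L := by
    have hle := Set.ncard_le_ncard hKL
    rw [Set.ncard_vadd_set, hcard] at hle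
    change _ ≤ Nat.card L at hle
    rw [Module.natCard_eq_pow_finrank (K := F) (V := L)] at hle
    exact (Nat.pow_le_pow_iff_right Finite.one_lt_card).1 hle
  have hL : IsLagrangian B L := isLagrangian_of_le_orthogonal hB
    (span_neg_vadd_le_orthogonal hB.isAlt hK hv) (by lia)
  have hA : v +ᵥ (L : Set V) ∈ affineLagrangians B := ⟨v, L, hL, rfl⟩
  rwa [Set.eq_of_subset_of_ncard_le hKL
    (hcard ▸ (ncard_of_mem_affineLagrangians hB hdim hA).le)]

end AffineCounting

section Binder

variable {𝕜 E V : Type*} [RCLike 𝕜] [NormedAddCommGroup E] [InnerProductSpace 𝕜 E]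
  [AddCommGroup V] {Ψ : V → E}

theorem hasPhaseMatrix_of_inner_eq_addChar {R : Type*} [CommRing R] [Finite R] [Module R V]
    [DecidableEq V] {B : V →ₗ[R] V →ₗ[R] R} (hB : B.IsAlt) (χ : AddChar R 𝕜) {m : ℝ}
    (hdiag : ∀ v, inner 𝕜 (Ψ v) (Ψ v) = (m : 𝕜) - 1)
    (hoff : ∀ v w, v ≠ w → inner 𝕜 (Ψ v) (Ψ w) = -χ (B v w)) :
    HasPhaseMatrix Ψ m (Matrix.of fun v w => χ (B v w)) where
  gram_eq := by
    ext v w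
    obtain rfl | hvw := eq_or_ne v w
    · rw [Matrix.gram_apply, hdiag]
      simp [hB.self_eq_zero, Algebra.algebraMap_eq_smul_one]
    · simp [hoff v w hvw, hvw]
  diag_eq_one v := by simp [hB.self_eq_zero]
  norm_eq_one v w := χ.norm_apply _

theorem binder_eq_affineLagrangians {F : Type*} [Field F] [Finite F] [Module F V] [Fintype V]
    {J : ℕ} (hJ : 0 < J) (hdim : Module.finrank F V = 2 * J) {B : V →ₗ[F] V →ₗ[F] F}
    (hB : IsSymplectic B) {χ : AddChar F 𝕜} (hχ : Function.Injective χ)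
    (hdiag : ∀ v, inner 𝕜 (Ψ v) (Ψ v) = (Nat.card F : 𝕜) ^ J - 1)
    (hoff : ∀ v w, v ≠ w → inner 𝕜 (Ψ v) (Ψ w) = -χ (B v w)) :
    binder 𝕜 Ψ = {K : Finset V | (K : Set V) ∈ affineLagrangians B} := by
  classical
  have hm : (1 : ℝ) < ((Nat.card F ^ J : ℕ) : ℝ) := by
    exact_mod_cast Nat.one_lt_pow hJ.ne' Finite.one_lt_card
  have hphase := hasPhaseMatrix_of_inner_eq_addChar hB.isAlt χ (m := (Nat.card F ^ J : ℕ))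
    (by simpa using hdiag) hoff
  ext K
  rw [hphase.mem_binder_iff hm, Set.mem_ofPred_eq, mem_affineLagrangians_iff hB hdim,
    Set.ncard_coe_finset, Nat.cast_inj]
  simp only [Matrix.of_apply, ← AddChar.map_add_eq_mul, hχ.eq_iff, SetLike.mem_coe]

end Binder

/-- The binder of the dual of a symplectic ETF is exactly the set
of all affine Lagrangian subspaces, which form a BIBD with parameters
`(P^{2J}, P^J, ∏_{j=1}^{J−1}(P^j+1), ∏_{j=1}^{J}(P^j+1), P^J ∏_{j=1}^{J}(P^j+1))`. -/
theorem binder_of_dual_symplectic_ETF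
    {P J : ℕ} [Fact (Nat.Prime P)] (hJ : 0 < J)
    {V : Type*} [AddCommGroup V] [Module (ZMod P) V] [Fintype V] [DecidableEq V]
    (hdim : Module.finrank (ZMod P) V = 2 * J)
    (B : V →ₗ[ZMod P] V →ₗ[ZMod P] ZMod P) (hB : IsSymplectic B)
    {E : Type*} [NormedAddCommGroup E] [InnerProductSpace ℂ E]
    (Ψ : V → E)
    (hdiag : ∀ v, (inner ℂ (Ψ v) (Ψ v) : ℂ) = ((P : ℂ) ^ J - 1))
    (hoff : ∀ v₁ v₂ : V, v₁ ≠ v₂ → (inner ℂ (Ψ v₁) (Ψ v₂) : ℂ) =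
      -Complex.exp (2 * Real.pi * Complex.I * ((B v₁ v₂).val : ℂ) / (P : ℂ))) :
    (binder ℂ Ψ =
      {K : Finset V | (K : Set V) ∈ affineLagrangians B}) ∧
    (affineLagrangians B).ncard = P ^ J * ∏ j ∈ Finset.Icc 1 J, (P ^ j + 1) ∧
    (∀ A ∈ affineLagrangians B, A.ncard = P ^ J) ∧
    (∀ x : V, {A ∈ affineLagrangians B | x ∈ A}.ncard =
      ∏ j ∈ Finset.Icc 1 J, (P ^ j + 1)) ∧
    (∀ x y : V, x ≠ y → {A ∈ affineLagrangians B | x ∈ A ∧ y ∈ A}.ncard =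
      ∏ j ∈ Finset.Icc 1 (J - 1), (P ^ j + 1)) := by
  have hcard : Nat.card (ZMod P) = P := Nat.card_zmod P
  have hchar : ∀ a : ZMod P, ZMod.stdAddChar a =
      Complex.exp (2 * Real.pi * Complex.I * (a.val : ℂ) / (P : ℂ)) := fun a => by
    rw [ZMod.stdAddChar_apply, ZMod.toCircle_apply]
  refine ⟨binder_eq_affineLagrangians hJ hdim hB ZMod.injective_stdAddChar (by rwa [hcard])
      fun v w hvw => by rw [hoff v w hvw, hchar], ?_, fun A hA => ?_, fun x => ?_,
      fun x y hxy => ?_⟩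
  · rw [ncard_affineLagrangians hB hdim, hcard]
  · rw [ncard_of_mem_affineLagrangians hB hdim hA, hcard]
  · rw [ncard_affineLagrangians_mem hB hdim, hcard]
  · rw [ncard_affineLagrangians_mem_mem hB hdim hxy, hcard]
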